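/- Let 0 < γ < 1 be real, let G be a finite connected d-regular bipartite graph of order n, and let λ > 0 be a real number such that every eigenvalue μ of the adjacency matrix of G with |μ| ≠ d satisfies |μ| ≤ λ. Then every nonempty vertex set S ⊆ V(G) with |S| ≤ n^{1−γ} satisfies |∂S| ≥ ( d²/(λ² + 2d²·n^{−γ}) − 1 )·|S|; in particular h_γ(G) ≥ d²/(λ² + 2d²·n^{−γ}) − 1. -/

import Mathlib

variable {V : Type*}

/-- The vertex boundary `∂S` of a vertex set `S`: vertices outside `S` having a
neighbor in `S`. -/
def vertexBoundary (G : SimpleGraph V) (S : Set V) : Set V :=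
  {v | v ∉ S ∧ ∃ u ∈ S, G.Adj u v}

/-- The expansion parameter `h_γ(G)`: the minimum of `|∂S| / |S|` over nonempty
vertex sets `S` with `|S| ≤ n^(1-γ)`, where `n` is the order of `G`. -/
noncomputable def hGamma [Fintype V] (G : SimpleGraph V) (γ : ℝ) : ℝ :=
  sInf {x : ℝ | ∃ S : Set V, S.Nonempty ∧
    (S.ncard : ℝ) ≤ (Fintype.card V : ℝ) ^ (1 - γ) ∧
    x = ((vertexBoundary G S).ncard : ℝ) / (S.ncard : ℝ)}

/-!
The adjacency matrix `A` sends `1_S` to a vector supported on the neighbourhood `N(S)` with total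
mass `d|S|`, so by Cauchy–Schwarz `d²|S|² ≤ |N(S)| ‖A 1_S‖²`. It remains to bound `‖A 1_S‖²` by
expanding `1_S` in an orthonormal eigenbasis. If `A v = μ v` with `|μ| = d`, then the sum of
`(d v_j - μ v_i)²` over all ordered pairs of adjacent vertices vanishes. Hence for two such
eigenvectors `v`, `w` with the same `μ` the product `v_i w_i` is constant along edges, and so
constant. Taking `v = w`, such an eigenvector of norm one has all entries `±1/√n`, so it contributes
at most `d²|S|²/n`; taking `v` and `w` orthogonal, `d` and `-d` have multiplicity at most one, so
there are at most two contributions of this kind. All the others add up to at most `λ²|S|`.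
-/

open Finset Matrix

section EigenvectorExpansion

variable [Fintype V] [DecidableEq V] {A : Matrix V V ℝ} (hA : A.IsHermitian)

theorem eigenvectorBasis_dotProduct (k l : V) :
    ⇑(hA.eigenvectorBasis k) ⬝ᵥ ⇑(hA.eigenvectorBasis l) = if k = l then 1 else 0 := by
  rw [dotProduct_comm]
  exact orthonormal_iff_ite.1 hA.eigenvectorBasis.orthonormal k l

theorem eigenvectorBasis_ne_zero (k : V) : ⇑(hA.eigenvectorBasis k) ≠ 0 := by
  intro h
  simpa [h] using eigenvectorBasis_dotProduct hA k k

theorem sum_sq_eigenvectorBasis_dotProduct (x : V → ℝ) :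
    ∑ k, (⇑(hA.eigenvectorBasis k) ⬝ᵥ x) ^ 2 = x ⬝ᵥ x := by
  simpa [EuclideanSpace.inner_eq_star_dotProduct, EuclideanSpace.real_norm_sq_eq,
    dotProduct, mul_comm, ← sq] using
    hA.eigenvectorBasis.sum_sq_norm_inner_right (WithLp.toLp 2 x)

theorem eigenvectorBasis_dotProduct_mulVec (k : V) (x : V → ℝ) :
    ⇑(hA.eigenvectorBasis k) ⬝ᵥ (A *ᵥ x) =
      hA.eigenvalues k * (⇑(hA.eigenvectorBasis k) ⬝ᵥ x) := by
  have hsymm : Aᵀ = A := (conjTranspose_eq_transpose_of_trivial A).symm.trans hA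
  rw [dotProduct_mulVec, ← mulVec_transpose, hsymm, hA.mulVec_eigenvectorBasis, smul_dotProduct,
    smul_eq_mul]

theorem mulVec_dotProduct_self_le {a b : ℝ} (T : Finset V)
    (hin : ∀ k ∈ T, |hA.eigenvalues k| ≤ a) (hout : ∀ k ∉ T, |hA.eigenvalues k| ≤ b)
    (x : V → ℝ) :
    (A *ᵥ x) ⬝ᵥ (A *ᵥ x) ≤
      b ^ 2 * (x ⬝ᵥ x) + a ^ 2 * ∑ k ∈ T, (⇑(hA.eigenvectorBasis k) ⬝ᵥ x) ^ 2 := by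
  simp only [← sum_sq_eigenvectorBasis_dotProduct hA, eigenvectorBasis_dotProduct_mulVec, mul_pow]
  rw [← sum_add_sum_compl T, add_comm, mul_sum, mul_sum]
  gcongr ?_ + ?_
  · refine (sum_le_sum fun k hk ↦ ?_).trans <|
      sum_le_sum_of_subset_of_nonneg (subset_univ Tᶜ) fun k _ _ ↦ by positivity
    gcongr ?_ * _
    exact sq_le_sq.2 ((hout k (mem_compl.1 hk)).trans (le_abs_self b))
  · refine sum_le_sum fun k hk ↦ ?_
    gcongr ?_ * _
    exact sq_le_sq.2 ((hin k hk).trans (le_abs_self a))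

end EigenvectorExpansion

section RegularGraph

variable [Fintype V] {G : SimpleGraph V} [DecidableRel G.Adj] {d : ℕ} {μ : ℝ} {v w : V → ℝ}

theorem sum_sum_neighborFinset {M : Type*} [AddCommMonoid M] (hreg : G.IsRegularOfDegree d)
    (f : V → M) : ∑ i, ∑ j ∈ G.neighborFinset i, f j = d • ∑ j, f j := by
  rw [sum_comm' (t' := univ) (s' := fun j ↦ G.neighborFinset j) (by simp [G.adj_comm]), smul_sum]
  simp [hreg.degree_eq]

theorem degree_mul_eq_eigenvalue_mul_of_adj (hreg : G.IsRegularOfDegree d) (hμ : μ ^ 2 = d ^ 2)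
    (hv : G.adjMatrix ℝ *ᵥ v = μ • v) {i j : V} (hij : G.Adj i j) : d * v j = μ * v i := by
  have local_sum (i : V) : ∑ j ∈ G.neighborFinset i, (d * v j - μ * v i) ^ 2 =
      d ^ 2 * (∑ j ∈ G.neighborFinset i, v j ^ 2 - d * v i ^ 2) := by
    have hvi : ∑ j ∈ G.neighborFinset i, v j = μ * v i := by
      simpa using congrFun hv i
    calc ∑ j ∈ G.neighborFinset i, (d * v j - μ * v i) ^ 2
        = d ^ 2 * ∑ j ∈ G.neighborFinset i, v j ^ 2
            - 2 * d * (μ * v i) * ∑ j ∈ G.neighborFinset i, v j + d * (μ * v i) ^ 2 := by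
          simp only [sub_sq, sum_add_distrib, sum_sub_distrib, mul_sum, sum_const,
            G.card_neighborFinset_eq_degree, hreg.degree_eq, nsmul_eq_mul]
          congr 2 <;> exact sum_congr rfl fun j _ ↦ by ring
      _ = _ := by
          rw [hvi]
          linear_combination (-d * v i ^ 2) * hμ
  have total : ∑ i, ∑ j ∈ G.neighborFinset i, (d * v j - μ * v i) ^ 2 = 0 := by
    simp only [local_sum, ← mul_sum, sum_sub_distrib, sum_sum_neighborFinset hreg, nsmul_eq_mul,
      sub_self, mul_zero]
  have row : ∑ j ∈ G.neighborFinset i, (d * v j - μ * v i) ^ 2 = 0 :=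
    (sum_eq_zero_iff_of_nonneg fun _ _ ↦ sum_nonneg fun _ _ ↦ sq_nonneg _).1 total i (mem_univ i)
  have entry : (d * v j - μ * v i) ^ 2 = 0 :=
    (sum_eq_zero_iff_of_nonneg fun _ _ ↦ sq_nonneg _).1 row j (by simpa using hij)
  exact sub_eq_zero.1 (sq_eq_zero_iff.1 entry)

theorem eigenvector_mul_eq_of_adj (hreg : G.IsRegularOfDegree d) (hμ : μ ^ 2 = d ^ 2)
    (hv : G.adjMatrix ℝ *ᵥ v = μ • v) (hw : G.adjMatrix ℝ *ᵥ w = μ • w) {i j : V}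
    (hij : G.Adj i j) : v i * w i = v j * w j := by
  have hd : (d : ℝ) ≠ 0 := by
    rw [← hreg.degree_eq i]
    exact_mod_cast hij.degree_pos_left.ne'
  refine mul_left_cancel₀ (pow_ne_zero 2 hd) ?_
  calc (d : ℝ) ^ 2 * (v i * w i) = (μ * v i) * (μ * w i) := by rw [← hμ]; ring
    _ = (d * v j) * (d * w j) := by
      rw [degree_mul_eq_eigenvalue_mul_of_adj hreg hμ hv hij,
        degree_mul_eq_eigenvalue_mul_of_adj hreg hμ hw hij]
    _ = d ^ 2 * (v j * w j) := by ring

theorem card_mul_eigenvector_mul_eq_dotProduct (hconn : G.Preconnected)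
    (hreg : G.IsRegularOfDegree d) (hμ : μ ^ 2 = d ^ 2) (hv : G.adjMatrix ℝ *ᵥ v = μ • v)
    (hw : G.adjMatrix ℝ *ᵥ w = μ • w) (i : V) :
    Fintype.card V * (v i * w i) = v ⬝ᵥ w := by
  have hconst (j : V) : v j * w j = v i * w i := by
    obtain ⟨p⟩ := hconn j i
    induction p with
    | nil => rfl
    | cons hadj _ ih => exact (eigenvector_mul_eq_of_adj hreg hμ hv hw hadj).trans ih
  simp [dotProduct, hconst]

theorem card_mul_sq_sum_eigenvector_le (hconn : G.Preconnected) (hreg : G.IsRegularOfDegree d)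
    (hμ : μ ^ 2 = d ^ 2) (hv : G.adjMatrix ℝ *ᵥ v = μ • v) (S : Finset V) :
    Fintype.card V * (∑ i ∈ S, v i) ^ 2 ≤ #S ^ 2 * (v ⬝ᵥ v) := by
  calc (Fintype.card V : ℝ) * (∑ i ∈ S, v i) ^ 2
      ≤ Fintype.card V * (#S * ∑ i ∈ S, v i ^ 2) := by gcongr; exact sq_sum_le_card_mul_sum_sq
    _ = #S * ∑ i ∈ S, Fintype.card V * (v i * v i) := by simp only [← mul_sum, sq]; ring
    _ = #S ^ 2 * (v ⬝ᵥ v) := by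
      simp only [card_mul_eigenvector_mul_eq_dotProduct hconn hreg hμ hv hv, sum_const,
        nsmul_eq_mul]
      ring

theorem eq_of_eigenvalues_eq_of_sq_eq_sq_degree [DecidableEq V] (hconn : G.Preconnected)
    (hreg : G.IsRegularOfDegree d) (hA : (G.adjMatrix ℝ).IsHermitian) {k l : V}
    (hk : hA.eigenvalues k ^ 2 = d ^ 2) (hkl : hA.eigenvalues k = hA.eigenvalues l) : k = l := by
  by_contra hne
  have hvk := hA.mulVec_eigenvectorBasis k
  have hvl := hA.mulVec_eigenvectorBasis l
  rw [← hkl] at hvl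
  have hcard : (Fintype.card V : ℝ) ≠ 0 := by
    exact_mod_cast (Fintype.card_pos_iff.2 ⟨k⟩).ne'
  have hkk := card_mul_eigenvector_mul_eq_dotProduct hconn hreg hk hvk hvk k
  have hll := card_mul_eigenvector_mul_eq_dotProduct hconn hreg hk hvl hvl k
  have horth := card_mul_eigenvector_mul_eq_dotProduct hconn hreg hk hvk hvl k
  rw [eigenvectorBasis_dotProduct, if_pos rfl] at hkk hll
  rw [eigenvectorBasis_dotProduct, if_neg hne] at horth
  have hvk0 := left_ne_zero_of_mul (right_ne_zero_of_mul (hkk ▸ one_ne_zero))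
  have hvl0 := left_ne_zero_of_mul (right_ne_zero_of_mul (hll ▸ one_ne_zero))
  exact mul_ne_zero hcard (mul_ne_zero hvk0 hvl0) horth

theorem card_filter_abs_eigenvalues_eq_degree_le_two [DecidableEq V] (hconn : G.Preconnected)
    (hreg : G.IsRegularOfDegree d) (hA : (G.adjMatrix ℝ).IsHermitian) :
    #{k | |hA.eigenvalues k| = d} ≤ 2 := by
  refine (card_le_card_of_injOn (t := {(d : ℝ), -(d : ℝ)}) hA.eigenvalues ?_ ?_).trans card_le_two
  · intro k hk
    simpa using eq_or_eq_neg_of_abs_eq (mem_filter.1 hk).2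
  · intro k hk l _ hkl
    refine eq_of_eigenvalues_eq_of_sq_eq_sq_degree hconn hreg hA ?_ hkl
    rw [← sq_abs, (mem_filter.1 hk).2]

theorem adjMatrix_mulVec_indicator_dotProduct_self_le (hconn : G.Preconnected)
    (hreg : G.IsRegularOfDegree d) {lam : ℝ}
    (heig : ∀ μ : ℝ, (∃ x : V → ℝ, x ≠ 0 ∧ G.adjMatrix ℝ *ᵥ x = μ • x) → |μ| ≠ d → |μ| ≤ lam)
    (S : Finset V) :
    (G.adjMatrix ℝ *ᵥ Set.indicator S 1) ⬝ᵥ (G.adjMatrix ℝ *ᵥ Set.indicator S 1) ≤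
      (lam ^ 2 + 2 * d ^ 2 * (#S / Fintype.card V)) * #S := by
  classical
  have hA : (G.adjMatrix ℝ).IsHermitian := G.isHermitian_adjMatrix ℝ
  set T : Finset V := {k | |hA.eigenvalues k| = d} with hT
  have hcoeff : ∀ k ∈ T,
      (⇑(hA.eigenvectorBasis k) ⬝ᵥ Set.indicator S 1) ^ 2 ≤ (#S : ℝ) ^ 2 / Fintype.card V := by
    intro k hk
    have hsq : hA.eigenvalues k ^ 2 = d ^ 2 := by rw [← sq_abs, (mem_filter.1 hk).2]
    have : Nonempty V := ⟨k⟩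
    rw [le_div_iff₀' (by positivity)]
    have hle := card_mul_sq_sum_eigenvector_le hconn hreg hsq (hA.mulVec_eigenvectorBasis k) S
    rw [eigenvectorBasis_dotProduct, if_pos rfl, mul_one] at hle
    simpa [dotProduct, Set.indicator_apply] using hle
  calc (G.adjMatrix ℝ *ᵥ Set.indicator S 1) ⬝ᵥ (G.adjMatrix ℝ *ᵥ Set.indicator S 1)
      ≤ lam ^ 2 * (Set.indicator S 1 ⬝ᵥ Set.indicator S 1) +
        d ^ 2 * ∑ k ∈ T, (⇑(hA.eigenvectorBasis k) ⬝ᵥ Set.indicator S 1) ^ 2 := by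
        refine mulVec_dotProduct_self_le hA T (fun k hk ↦ (mem_filter.1 hk).2.le)
          (fun k hk ↦ heig _ ⟨_, eigenvectorBasis_ne_zero hA k, hA.mulVec_eigenvectorBasis k⟩ ?_) _
        simpa [hT] using hk
    _ ≤ lam ^ 2 * #S + d ^ 2 * (2 * (#S ^ 2 / Fintype.card V)) := by
        gcongr ?_ * ?_ + _ * ?_
        · simp [dotProduct, Set.indicator_apply]
        · refine (sum_le_card_nsmul _ _ _ hcoeff).trans ?_
          rw [nsmul_eq_mul]
          gcongr
          exact_mod_cast card_filter_abs_eigenvalues_eq_degree_le_two hconn hreg hA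
    _ = _ := by ring

/-- The neighbourhood `N(S)`: all vertices having a neighbour in `S`, those inside `S` included.
Spectral arguments bound its size, from which that of the vertex boundary follows. -/
def neighborhood [DecidableEq V] (G : SimpleGraph V) [DecidableRel G.Adj] (S : Finset V) :
    Finset V :=
  S.biUnion fun u ↦ G.neighborFinset u

theorem adjMatrix_mulVec_indicator_eq_zero_of_notMem [DecidableEq V] {S : Finset V} {i : V}
    (hi : i ∉ neighborhood G S) : (G.adjMatrix ℝ *ᵥ Set.indicator S 1) i = 0 := by
  rw [SimpleGraph.adjMatrix_mulVec_apply]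
  refine sum_eq_zero fun u hu ↦ Set.indicator_of_notMem (fun huS ↦ hi ?_) _
  exact mem_biUnion.2 ⟨u, huS, by simpa [G.adj_comm] using hu⟩

theorem sum_neighborhood_adjMatrix_mulVec_indicator [DecidableEq V] (hreg : G.IsRegularOfDegree d)
    (S : Finset V) :
    ∑ i ∈ neighborhood G S, (G.adjMatrix ℝ *ᵥ Set.indicator S 1) i = d * #S := by
  rw [sum_subset (subset_univ _) fun i _ hi ↦ adjMatrix_mulVec_indicator_eq_zero_of_notMem hi]
  simp_rw [SimpleGraph.adjMatrix_mulVec_apply, sum_sum_neighborFinset hreg]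
  simp [Set.indicator_apply]

theorem sq_degree_mul_card_le_mul_card_neighborhood [DecidableEq V] (hconn : G.Preconnected)
    (hreg : G.IsRegularOfDegree d) {lam : ℝ}
    (heig : ∀ μ : ℝ, (∃ x : V → ℝ, x ≠ 0 ∧ G.adjMatrix ℝ *ᵥ x = μ • x) → |μ| ≠ d → |μ| ≤ lam)
    (S : Finset V) :
    (d : ℝ) ^ 2 * #S ≤ (lam ^ 2 + 2 * d ^ 2 * (#S / Fintype.card V)) * #(neighborhood G S) := by
  rcases S.eq_empty_or_nonempty with rfl | hS
  · simp [neighborhood]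
  let N := neighborhood G S
  let y := G.adjMatrix ℝ *ᵥ Set.indicator S 1
  refine le_of_mul_le_mul_right ?_ (Nat.cast_pos.2 hS.card_pos : (0 : ℝ) < #S)
  calc (d : ℝ) ^ 2 * #S * #S = (∑ i ∈ N, y i) ^ 2 := by
        rw [sum_neighborhood_adjMatrix_mulVec_indicator hreg S]; ring
    _ ≤ #N * ∑ i ∈ N, y i ^ 2 := sq_sum_le_card_mul_sum_sq
    _ ≤ #N * (y ⬝ᵥ y) := by
        simp only [dotProduct, ← sq]
        gcongr
        exact subset_univ N
    _ ≤ #N * ((lam ^ 2 + 2 * d ^ 2 * (#S / Fintype.card V)) * #S) := by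
        gcongr
        exact adjMatrix_mulVec_indicator_dotProduct_self_le hconn hreg heig S
    _ = _ := by ring

end RegularGraph

section VertexBoundary

variable [Fintype V] {G : SimpleGraph V} {γ : ℝ}

theorem card_neighborhood_le [DecidableEq V] [DecidableRel G.Adj] (S : Finset V) :
    #(neighborhood G S) ≤ #S + (vertexBoundary G S).ncard := by
  have hsub : (neighborhood G S : Set V) ⊆ S ∪ vertexBoundary G S := by
    intro v hv
    by_cases hvS : v ∈ S
    · exact Or.inl hvS
    · exact Or.inr ⟨hvS, by simpa [neighborhood] using hv⟩
  simpa only [Set.ncard_coe_finset] using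
    (Set.ncard_le_ncard hsub (Set.toFinite _)).trans (Set.ncard_union_le _ _)

theorem le_hGamma [Nonempty V] (hγ : γ ≤ 1) {c : ℝ}
    (hc : ∀ S : Set V, S.Nonempty → (S.ncard : ℝ) ≤ (Fintype.card V : ℝ) ^ (1 - γ) →
      c * S.ncard ≤ (vertexBoundary G S).ncard) :
    c ≤ hGamma G γ := by
  refine le_csInf ?_ ?_
  · obtain ⟨v⟩ := ‹Nonempty V›
    refine ⟨_, {v}, Set.singleton_nonempty v, ?_, rfl⟩
    rw [Set.ncard_singleton, Nat.cast_one]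
    exact Real.one_le_rpow (mod_cast Fintype.card_pos_iff.2 ⟨v⟩) (sub_nonneg.2 hγ)
  · rintro _ ⟨S, hS, hcard, rfl⟩
    have hpos : (0 : ℝ) < S.ncard := mod_cast (Set.ncard_pos S.toFinite).2 hS
    exact (le_div_iff₀ hpos).2 (hc S hS hcard)

theorem div_sub_one_mul_ncard_le_ncard_vertexBoundary [DecidableRel G.Adj]
    (hconn : G.Connected) {d : ℕ} (hreg : G.IsRegularOfDegree d) {lam : ℝ} (hlam : 0 < lam)
    (heig : ∀ μ : ℝ, (∃ x : V → ℝ, x ≠ 0 ∧ G.adjMatrix ℝ *ᵥ x = μ • x) → |μ| ≠ d → |μ| ≤ lam)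
    {S : Set V} (hS : (S.ncard : ℝ) ≤ (Fintype.card V : ℝ) ^ (1 - γ)) :
    ((d : ℝ) ^ 2 / (lam ^ 2 + 2 * (d : ℝ) ^ 2 * (Fintype.card V : ℝ) ^ (-γ)) - 1) * S.ncard ≤
      (vertexBoundary G S).ncard := by
  classical
  have := hconn.nonempty
  lift S to Finset V using S.toFinite
  rw [Set.ncard_coe_finset] at hS ⊢
  set N := neighborhood G S
  have hdensity : (#S : ℝ) / Fintype.card V ≤ (Fintype.card V : ℝ) ^ (-γ) := by
    rw [div_le_iff₀ (by positivity), ← Real.rpow_add_one (by positivity), neg_add_eq_sub]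
    exact hS
  have hexpand : (d : ℝ) ^ 2 * #S ≤
      (lam ^ 2 + 2 * d ^ 2 * (Fintype.card V : ℝ) ^ (-γ)) * #N := by
    refine (sq_degree_mul_card_le_mul_card_neighborhood hconn.preconnected hreg heig S).trans ?_
    gcongr
  have hN : (#N : ℝ) ≤ #S + (vertexBoundary G S).ncard :=
    mod_cast card_neighborhood_le S
  rw [sub_one_mul, sub_le_iff_le_add', div_mul_eq_mul_div]
  exact ((div_le_iff₀' (by positivity)).2 hexpand).trans hN

end VertexBoundary

theorem expansion_of_bipartite_spectral_gap_general [Fintype V]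
    (γ : ℝ) (hγ : γ ≤ 1) (G : SimpleGraph V) [DecidableRel G.Adj] (hconn : G.Connected)
    (d : ℕ) (hreg : G.IsRegularOfDegree d) (lam : ℝ) (hlam : 0 < lam)
    (heig : ∀ μ : ℝ, (∃ x : V → ℝ, x ≠ 0 ∧ (G.adjMatrix ℝ).mulVec x = μ • x) →
      |μ| ≠ (d : ℝ) → |μ| ≤ lam) :
    (∀ S : Set V, S.Nonempty → (S.ncard : ℝ) ≤ (Fintype.card V : ℝ) ^ (1 - γ) →
      ((d : ℝ) ^ 2 / (lam ^ 2 + 2 * (d : ℝ) ^ 2 * (Fintype.card V : ℝ) ^ (-γ)) - 1) *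
          (S.ncard : ℝ) ≤ ((vertexBoundary G S).ncard : ℝ)) ∧
    (d : ℝ) ^ 2 / (lam ^ 2 + 2 * (d : ℝ) ^ 2 * (Fintype.card V : ℝ) ^ (-γ)) - 1 ≤
      hGamma G γ := by
  have := hconn.nonempty
  have hexpansion (S : Set V) (_ : S.Nonempty)
      (hS : (S.ncard : ℝ) ≤ (Fintype.card V : ℝ) ^ (1 - γ)) :=
    div_sub_one_mul_ncard_le_ncard_vertexBoundary hconn hreg hlam heig hS
  exact ⟨hexpansion, le_hGamma hγ hexpansion⟩

/-- Let `0 < γ < 1`, let `G` be a finite connected `d`-regular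
bipartite graph of order `n`, and let `λ > 0` be such that every eigenvalue `μ`
of the adjacency matrix of `G` with `|μ| ≠ d` satisfies `|μ| ≤ λ`.  Then every
nonempty `S ⊆ V(G)` with `|S| ≤ n^(1-γ)` satisfies
`|∂S| ≥ (d²/(λ² + 2d²·n^(-γ)) - 1)·|S|`; in particular
`h_γ(G) ≥ d²/(λ² + 2d²·n^(-γ)) - 1`. -/
theorem expansion_of_bipartite_spectral_gap [Fintype V] [DecidableEq V]
    (γ : ℝ) (hγ0 : 0 < γ) (hγ1 : γ < 1)
    (G : SimpleGraph V) [DecidableRel G.Adj] (hconn : G.Connected)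
    (d : ℕ) (hreg : G.IsRegularOfDegree d)
    (hbip : ∃ c : V → Bool, ∀ u v : V, G.Adj u v → c u ≠ c v)
    (lam : ℝ) (hlam : 0 < lam)
    (heig : ∀ μ : ℝ, (∃ x : V → ℝ, x ≠ 0 ∧ (G.adjMatrix ℝ).mulVec x = μ • x) →
      |μ| ≠ (d : ℝ) → |μ| ≤ lam) :
    (∀ S : Set V, S.Nonempty → (S.ncard : ℝ) ≤ (Fintype.card V : ℝ) ^ (1 - γ) →
      ((d : ℝ) ^ 2 / (lam ^ 2 + 2 * (d : ℝ) ^ 2 * (Fintype.card V : ℝ) ^ (-γ)) - 1) *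
          (S.ncard : ℝ) ≤ ((vertexBoundary G S).ncard : ℝ)) ∧
    (d : ℝ) ^ 2 / (lam ^ 2 + 2 * (d : ℝ) ^ 2 * (Fintype.card V : ℝ) ^ (-γ)) - 1 ≤
      hGamma G γ :=
  expansion_of_bipartite_spectral_gap_general γ hγ1.le G hconn d hreg lam hlam heig
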